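/- For all integers ℓ ≥ 0 and r ≥ 0, the geometric realization of the poset X_{ℓ,r} is homeomorphic to the subspace D_{ℓ,r} of ℝ^ℓ, the union of all integer cubes contained in the domain {x ∈ ℝ^ℓ : 0 ≤ x_1 ≤ x_2 ≤ ... ≤ x_ℓ ≤ r}. (Lemma 2.5 of the paper.) -/

import Mathlib

/-- The geometric realization of a poset `P` (the realization of the nerve of `P`, i.e. of
the order complex of `P`), modelled concretely as the space of finitely supported
"barycentric coordinate" functions: assignments of nonnegative weights summing to `1`
whose support is a chain of `P`.  It is topologized as a subspace of `P → ℝ` with the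
product topology. -/
def PosetRealization (P : Type*) [Preorder P] : Set (P → ℝ) :=
  {f | (∀ p, 0 ≤ f p) ∧ (Function.support f).Finite ∧ ∑ᶠ p, f p = 1 ∧
      IsChain (· ≤ ·) (Function.support f)}

/-- The map of geometric realizations induced by a map of posets `g : P → Q`
(the realization of the induced simplicial map of nerves): a point with barycentric
coordinates `f` is sent to the point whose weight at `q` is the total weight of the
fiber `g ⁻¹ {q}`. -/
noncomputable def inducedChainMap {P Q : Type*} (g : P → Q) (f : P → ℝ) : Q → ℝ :=
  fun q => ∑ᶠ p ∈ {p | g p = q}, f p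

/-- The three letters `a`, `b`, `(ab)` used to form the words of the poset `X_{ℓ,r}`. -/
inductive XLetter : Type
  | A : XLetter
  | B : XLetter
  | AB : XLetter
deriving DecidableEq

/-- Number of occurrences of the letter `a` contributed by a letter. -/
def XLetter.ca : XLetter → ℕ
  | .A => 1
  | .B => 0
  | .AB => 1

/-- Number of occurrences of the letter `b` contributed by a letter. -/
def XLetter.cb : XLetter → ℕ
  | .A => 0
  | .B => 1
  | .AB => 1

/-- One step of the order relation on words: `XStep x y` holds iff `x` is obtained from `y`
by replacing one adjacent pair `ab` or `ba` by the single letter `(ab)`. -/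
def XStep (x y : List XLetter) : Prop :=
  ∃ u v : List XLetter, x = u ++ [XLetter.AB] ++ v ∧
    (y = u ++ [XLetter.A, XLetter.B] ++ v ∨ y = u ++ [XLetter.B, XLetter.A] ++ v)

/-- The underlying set of the poset `X_{ℓ,r}`: words in the letters `a`, `b`, `(ab)` with
exactly `l` occurrences of `a` and `r` occurrences of `b`. -/
def XWord (l r : ℕ) : Type :=
  {w : List XLetter // (w.map XLetter.ca).sum = l ∧ (w.map XLetter.cb).sum = r}

theorem XStep.length_lt {x y : List XLetter} (h : XStep x y) : x.length < y.length := by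
  obtain ⟨u, v, rfl, (rfl | rfl)⟩ := h <;> simp [List.length_append]

theorem xword_le_length {x y : List XLetter} (h : Relation.ReflTransGen XStep x y) :
    x.length ≤ y.length := by
  induction h with
  | refl => exact le_rfl
  | tail _ h ih => exact ih.trans h.length_lt.le

/-- The partial order on `X_{ℓ,r}`, generated by the replacement steps. -/
instance (l r : ℕ) : PartialOrder (XWord l r) where
  le x y := Relation.ReflTransGen XStep x.1 y.1
  le_refl _ := Relation.ReflTransGen.refl
  le_trans _ _ _ h h' := Relation.ReflTransGen.trans h h'
  le_antisymm x y h h' := by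
    rcases Relation.ReflTransGen.cases_head h with heq | ⟨z, hxz, hzy⟩
    · exact Subtype.ext heq
    · exact absurd ((xword_le_length h').trans_lt
        (hxz.length_lt.trans_le (xword_le_length hzy))) (lt_irrefl _)

/-- An integer cube in `ℝ^ℓ`: a product of factors each of which is either an integer
singleton `{m}` or an integer unit interval `[m, m+1]`. -/
def IsIntegerCube {l : ℕ} (C : Set (Fin l → ℝ)) : Prop :=
  ∃ (m : Fin l → ℤ) (s : Fin l → Bool),
    C = Set.univ.pi fun i =>
      if s i then Set.Icc (m i : ℝ) ((m i : ℝ) + 1) else {(m i : ℝ)}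

/-- The domain `{x : 0 ≤ x 1 ≤ x 2 ≤ … ≤ x ℓ ≤ r}` in `ℝ^ℓ`. -/
def XDomain (l r : ℕ) : Set (Fin l → ℝ) :=
  {x | (∀ i j : Fin l, i ≤ j → x i ≤ x j) ∧ (∀ i, 0 ≤ x i) ∧ ∀ i, x i ≤ (r : ℝ)}

/-- `D_{ℓ,r}`: the union of all integer cubes contained in the domain
`0 ≤ x 1 ≤ … ≤ x ℓ ≤ r`. -/
def Dlr (l r : ℕ) : Set (Fin l → ℝ) :=
  ⋃ C ∈ {C : Set (Fin l → ℝ) | IsIntegerCube C ∧ C ⊆ XDomain l r}, C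

/-! A word is read as a product of intervals, one for each letter containing an `a`: the interval
runs from the number of `b`s strictly before that letter to the number of `b`s up to and including
it. This identifies the words with the integer cubes contained in the domain, and replacing `ab` or
`ba` by `(ab)` enlarges the cube, so that `X_{ℓ,r}` is the family of these cubes ordered by reverse
inclusion.

The homeomorphism is the barycentric subdivision of the cubical complex: a point of the realization
is sent to the weighted sum of the centres of its cubes. For the inverse, at each level
`t ∈ (0, 1]` snap the coordinates of `x` lying within `t / 2` of an integer to that integer and
replace the other ones by the unit interval around them. The resulting cubes shrink as `t` grows, so
they form a chain, and the weight of a cube is the length of the set of levels at which it occurs.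
The weighted centre is again `x`, since `⌊·⌋` averages over a unit interval to its left endpoint. -/

open MeasureTheory Set

namespace PosetRealization

theorem mem_iff_of_fintype {P : Type*} [Preorder P] [Fintype P] {f : P → ℝ} :
    f ∈ PosetRealization P ↔
      (∀ p, 0 ≤ f p) ∧ ∑ p, f p = 1 ∧ ∀ p q, f p ≠ 0 → f q ≠ 0 → p ≤ q ∨ q ≤ p := by
  rw [PosetRealization, mem_ofPred_eq, finsum_eq_sum_of_fintype]
  exact and_congr_right fun _ => ⟨fun ⟨_, hsum, hchain⟩ => ⟨hsum, fun p q => hchain.total⟩,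
    fun ⟨hsum, htotal⟩ => ⟨toFinite _, hsum, fun p hp q hq _ => htotal p q hp hq⟩⟩

theorem exists_forall_ne_zero_le {P : Type*} [Preorder P] {f : P → ℝ}
    (hf : f ∈ PosetRealization P) : ∃ p, ∀ q, f q ≠ 0 → p ≤ q := by
  obtain ⟨-, hfin, hsum, hchain⟩ := hf
  have hne : (Function.support f).Nonempty := by
    rw [Function.support_nonempty_iff]
    rintro rfl
    simp at hsum
  obtain ⟨p, hp, hmin⟩ := hfin.exists_minimal hne
  exact ⟨p, fun q hq => (hchain.total hp hq).elim id (hmin hq)⟩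

theorem isCompact (P : Type*) [Preorder P] [Finite P] : IsCompact (PosetRealization P) := by
  cases nonempty_fintype P
  have hclosed : IsClosed (PosetRealization P) := by
    have heq : PosetRealization P = {f | ∀ p, 0 ≤ f p} ∩ ({f | ∑ p, f p = 1} ∩
        {f | ∀ p q, ¬(p ≤ q ∨ q ≤ p) → f p * f q = 0}) := by
      ext f
      simp only [mem_iff_of_fintype, mem_inter_iff, mem_ofPred_eq, mul_eq_zero]
      grind
    rw [heq]
    simp only [ofPred_forall]
    refine .inter (isClosed_iInter fun p => isClosed_le continuous_const (by fun_prop))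
      (.inter (isClosed_eq (by fun_prop) continuous_const) ?_)
    exact isClosed_iInter fun p => isClosed_iInter fun q => isClosed_iInter fun _ =>
      isClosed_eq (by fun_prop) continuous_const
  refine (isCompact_univ_pi fun _ => isCompact_Icc (a := (0 : ℝ)) (b := 1)).of_isClosed_subset
    hclosed fun f hf p _ => ?_
  obtain ⟨hnonneg, hsum, -⟩ := mem_iff_of_fintype.1 hf
  exact ⟨hnonneg p, hsum ▸ Finset.single_le_sum (fun q _ => hnonneg q) (Finset.mem_univ p)⟩

end PosetRealization

theorem intervalIntegrable_floor (a b : ℝ) :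
    IntervalIntegrable (fun u => (⌊u⌋ : ℝ)) volume a b :=
  (Int.cast_mono.comp Int.floor_mono).intervalIntegrable

theorem integral_floor (x : ℝ) : ∫ u in x..x + 1, (⌊u⌋ : ℝ) = x := by
  have hfract : ∫ u in x..x + 1, Int.fract u = 1 / 2 := by
    rw [(Int.fract_periodic ℝ).intervalIntegral_add_eq x 0, zero_add,
      intervalIntegral.integral_congr_Ioo_of_le (g := fun u => u) zero_le_one fun u hu =>
        Int.fract_eq_self.2 ⟨hu.1.le, hu.2⟩]
    simp
  have hadd := intervalIntegral.integral_sub (intervalIntegral.intervalIntegrable_id)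
    (intervalIntegrable_floor x (x + 1))
  simp only [Int.self_sub_floor, hfract, integral_id] at hadd
  linarith

/-! ### Elementary cubes -/

/-- An integer interval `[lo, hi]` of length `0` or `1`: the possible factors of an integer cube.
Intervals are ordered by inclusion. -/
@[ext]
structure ElementaryInterval where
  lo : ℤ
  hi : ℤ
  lo_le_hi : lo ≤ hi
  hi_le_lo_add_one : hi ≤ lo + 1

namespace ElementaryInterval

instance : PartialOrder ElementaryInterval where
  le I J := J.lo ≤ I.lo ∧ I.hi ≤ J.hi
  le_refl _ := ⟨le_rfl, le_rfl⟩
  le_trans _ _ _ hIJ hJK := ⟨hJK.1.trans hIJ.1, hIJ.2.trans hJK.2⟩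
  le_antisymm _ _ hIJ hJI :=
    ElementaryInterval.ext (hJI.1.antisymm hIJ.1) (hIJ.2.antisymm hJI.2)

theorem le_def {I J : ElementaryInterval} : I ≤ J ↔ J.lo ≤ I.lo ∧ I.hi ≤ J.hi := Iff.rfl

/-- The degenerate elementary interval `[m, m]`. -/
def point (m : ℤ) : ElementaryInterval := ⟨m, m, le_rfl, by lia⟩

/-- The nondegenerate elementary interval `[m, m + 1]`. -/
def unit (m : ℤ) : ElementaryInterval := ⟨m, m + 1, by lia, le_rfl⟩

@[simp] theorem point_lo (m : ℤ) : (point m).lo = m := rfl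

@[simp] theorem point_hi (m : ℤ) : (point m).hi = m := rfl

@[simp] theorem unit_lo (m : ℤ) : (unit m).lo = m := rfl

@[simp] theorem unit_hi (m : ℤ) : (unit m).hi = m + 1 := rfl

theorem eq_point_or_eq_unit (I : ElementaryInterval) : I = point I.lo ∨ I = unit I.lo := by
  rcases I.lo_le_hi.eq_or_lt with h | h
  · exact .inl (ElementaryInterval.ext rfl h.symm)
  · exact .inr (ElementaryInterval.ext rfl (I.hi_le_lo_add_one.antisymm h))

/-- The midpoint of an elementary interval. -/
noncomputable def mid (I : ElementaryInterval) : ℝ := (I.lo + I.hi) / 2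

variable {I J : ElementaryInterval}

theorem mid_mem_Icc_of_le (h : I ≤ J) : I.mid ∈ Icc (J.lo : ℝ) J.hi := by
  have hlo : (J.lo : ℝ) ≤ I.lo := mod_cast h.1
  have hhi : (I.hi : ℝ) ≤ J.hi := mod_cast h.2
  have hI : (I.lo : ℝ) ≤ I.hi := mod_cast I.lo_le_hi
  constructor <;> rw [mid] <;> linarith

theorem mid_mem_Icc_of_ge (h : I ≤ J) : J.mid ∈ Icc (I.hi - 1 / 2 : ℝ) (I.lo + 1 / 2) := by
  have hlo : (J.lo : ℝ) ≤ I.lo := mod_cast h.1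
  have hhi : (I.hi : ℝ) ≤ J.hi := mod_cast h.2
  have hJ : (J.hi : ℝ) ≤ J.lo + 1 := mod_cast J.hi_le_lo_add_one
  constructor <;> rw [mid] <;> linarith

end ElementaryInterval

/-- A product of elementary intervals, encoded by its factors and ordered by inclusion. -/
abbrev ElementaryCube (ι : Type*) := ι → ElementaryInterval

namespace ElementaryCube

variable {ι : Type*}

/-- The subset of `ℝ^ι` that a cube stands for. -/
def toSet (Q : ElementaryCube ι) : Set (ι → ℝ) :=
  Icc (fun i => ((Q i).lo : ℝ)) fun i => ((Q i).hi : ℝ)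

theorem mem_toSet {Q : ElementaryCube ι} {x : ι → ℝ} :
    x ∈ Q.toSet ↔ ∀ i, ((Q i).lo : ℝ) ≤ x i ∧ x i ≤ (Q i).hi := by
  simp only [toSet, mem_Icc, Pi.le_def, forall_and]

theorem toSet_mono : Monotone (toSet : ElementaryCube ι → Set (ι → ℝ)) := fun _ _ h =>
  Icc_subset_Icc (fun i => Int.cast_le.2 (h i).1) fun i => Int.cast_le.2 (h i).2

/-- The centre of a cube. -/
noncomputable def center (Q : ElementaryCube ι) (i : ι) : ℝ := (Q i).mid

theorem center_mem_toSet_of_le {Q R : ElementaryCube ι} (h : Q ≤ R) : Q.center ∈ R.toSet :=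
  mem_toSet.2 fun i => ElementaryInterval.mid_mem_Icc_of_le (h i)

/-- The levels `t ∈ (0, 1]` at which the point `x` is snapped to the cube `Q`: coordinates within
`t / 2` of an integer are moved to that integer, and the others are replaced by the unit interval
containing them. The formula `⌊x i - t / 2⌋ + 1` differs from the more symmetric `⌈x i - t / 2⌉`
for at most one `t` in each coordinate, and needs only the integral of `⌊·⌋`. -/
def levelSet (x : ι → ℝ) (Q : ElementaryCube ι) : Set ℝ :=
  {t ∈ Ioc (0 : ℝ) 1 | ∀ i, ⌊x i + t / 2⌋ = (Q i).lo ∧ ⌊x i - t / 2⌋ + 1 = (Q i).hi}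

variable {x : ι → ℝ} {Q R : ElementaryCube ι} {s t : ℝ}

theorem measurableSet_levelSet [Countable ι] (x : ι → ℝ) (Q : ElementaryCube ι) :
    MeasurableSet (levelSet x Q) := by
  have heq : levelSet x Q = Ioc 0 1 ∩
      ⋂ i, {t | ⌊x i + t / 2⌋ = (Q i).lo} ∩ {t | ⌊x i - t / 2⌋ + 1 = (Q i).hi} := by
    ext
    simp [levelSet]
  rw [heq]
  exact measurableSet_Ioc.inter <| .iInter fun i =>
    (measurableSet_eq_fun (by fun_prop) measurable_const).inter
      (measurableSet_eq_fun (by fun_prop) measurable_const)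

theorem exists_le_mem_levelSet (hx : x ∈ Q.toSet) (ht : t ∈ Ioc (0 : ℝ) 1) :
    ∃ R ≤ Q, t ∈ levelSet x R := by
  obtain ⟨ht₀, ht₁⟩ := ht
  rw [mem_toSet] at hx
  have hle (i) : ⌊x i + t / 2⌋ ≤ ⌊x i - t / 2⌋ + 1 := by
    rw [← Int.floor_add_one]
    exact Int.floor_mono (by linarith)
  have hge (i) : ⌊x i - t / 2⌋ ≤ ⌊x i + t / 2⌋ := Int.floor_mono (by linarith)
  refine ⟨fun i => ⟨⌊x i + t / 2⌋, ⌊x i - t / 2⌋ + 1, hle i, by linarith [hge i]⟩, fun i => ?_,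
    ⟨ht₀, ht₁⟩, fun i => ⟨rfl, rfl⟩⟩
  exact ⟨Int.le_floor.2 (by linarith [(hx i).1]), Int.floor_lt.2 (by linarith [(hx i).2])⟩

theorem le_of_mem_levelSet (hs : s ∈ levelSet x Q) (ht : t ∈ levelSet x R) (hst : s ≤ t) :
    R ≤ Q := fun i => by
  rw [ElementaryInterval.le_def, ← (hs.2 i).1, ← (hs.2 i).2, ← (ht.2 i).1, ← (ht.2 i).2]
  exact ⟨Int.floor_mono (by linarith), add_le_add_left (Int.floor_mono (by linarith)) 1⟩

theorem disjoint_levelSet (h : Q ≠ R) : Disjoint (levelSet x Q) (levelSet x R) :=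
  disjoint_left.2 fun _ hQ hR =>
    h ((le_of_mem_levelSet hR hQ le_rfl).antisymm (le_of_mem_levelSet hQ hR le_rfl))

theorem integral_midpoint_floor (x : ℝ) :
    ∫ t in Ioc (0 : ℝ) 1, ((⌊x + t / 2⌋ : ℝ) + (⌊x - t / 2⌋ + 1)) / 2 = x := by
  have hadd : IntervalIntegrable (fun t => (⌊x + t / 2⌋ : ℝ)) volume 0 1 :=
    Monotone.intervalIntegrable fun s t hst => Int.cast_le.2 (Int.floor_mono (by linarith))
  have hsub : IntervalIntegrable (fun t => (⌊x - t / 2⌋ : ℝ)) volume 0 1 :=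
    Antitone.intervalIntegrable fun s t hst => Int.cast_le.2 (Int.floor_mono (by linarith))
  have hsplit := intervalIntegral.integral_add_adjacent_intervals
    (intervalIntegrable_floor (x - 1 / 2) x) (intervalIntegrable_floor x (x + 1 / 2))
  have hperiod := integral_floor (x - 1 / 2)
  rw [← intervalIntegral.integral_of_le zero_le_one, intervalIntegral.integral_div,
    intervalIntegral.integral_add hadd (hsub.add intervalIntegrable_const),
    intervalIntegral.integral_add hsub intervalIntegrable_const,
    intervalIntegral.integral_comp_add_div (fun u => (⌊u⌋ : ℝ)) two_ne_zero,
    intervalIntegral.integral_comp_sub_div (fun u => (⌊u⌋ : ℝ)) two_ne_zero]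
  rw [show x - 1 / 2 + 1 = x + 1 / 2 by ring] at hperiod
  simp only [zero_div, add_zero, sub_zero, smul_eq_mul, intervalIntegral.integral_const, mul_one]
  linarith

end ElementaryCube

/-! ### Face posets of cubical complexes -/

namespace ElementaryCube

variable {P ι : Type*} {c : P → ElementaryCube ι}

/-- The affine extension of the map sending each element of `P` to the centre of its cube. -/
noncomputable def barycenter [Fintype P] (c : P → ElementaryCube ι) (f : P → ℝ) : ι → ℝ :=
  ∑ p, f p • (c p).center

theorem barycenter_apply [Fintype P] (c : P → ElementaryCube ι) (f : P → ℝ) (i : ι) :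
    barycenter c f i = ∑ p, f p * (c p i).mid := by
  simp [barycenter, center, Finset.sum_apply]

theorem continuous_barycenter [Fintype P] (c : P → ElementaryCube ι) :
    Continuous (barycenter c) := by
  unfold barycenter
  fun_prop

/-- The barycentric coordinates of a point `x` of the complex: the weight of each cube is the
length of the set of levels at which `x` is snapped to it. -/
noncomputable def cubeWeight (c : P → ElementaryCube ι) (x : ι → ℝ) (p : P) : ℝ :=
  volume.real (levelSet x (c p))

variable {x : ι → ℝ} {f : P → ℝ}

theorem iUnion_levelSet (hface : IsLowerSet (range c)) (hx : x ∈ ⋃ p, (c p).toSet) :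
    ⋃ p, levelSet x (c p) = Ioc 0 1 := by
  refine Subset.antisymm (iUnion_subset fun p t ht => ht.1) fun t ht => ?_
  obtain ⟨p, hp⟩ := mem_iUnion.1 hx
  obtain ⟨R, hR, htR⟩ := exists_le_mem_levelSet hp ht
  obtain ⟨q, rfl⟩ := hface hR (mem_range_self p)
  exact mem_iUnion.2 ⟨q, htR⟩

theorem sum_cubeWeight_mul [Fintype P] [Countable ι] (hinj : Function.Injective c)
    (hface : IsLowerSet (range c)) (hx : x ∈ ⋃ p, (c p).toSet) {g : ℝ → ℝ} {a : P → ℝ}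
    (hg : ∀ p, ∀ t ∈ levelSet x (c p), g t = a p) :
    ∑ p, cubeWeight c x p * a p = ∫ t in Ioc (0 : ℝ) 1, g t := by
  have hmeas (p) : MeasurableSet (levelSet x (c p)) := measurableSet_levelSet x (c p)
  have hfin (p) : volume (levelSet x (c p)) ≠ ⊤ :=
    measure_ne_top_of_subset (fun _ ht => ht.1) measure_Ioc_lt_top.ne
  rw [← iUnion_levelSet hface hx, integral_iUnion_fintype hmeas
    (fun p q hpq => disjoint_levelSet (hinj.ne hpq)) fun p =>
      (integrableOn_const (C := a p) (hfin p)).congr_fun (fun t ht => (hg p t ht).symm) (hmeas p)]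
  refine Finset.sum_congr rfl fun p _ => ?_
  rw [setIntegral_congr_fun (hmeas p) (hg p), setIntegral_const, smul_eq_mul, cubeWeight]

theorem sum_cubeWeight [Fintype P] [Countable ι] (hinj : Function.Injective c)
    (hface : IsLowerSet (range c)) (hx : x ∈ ⋃ p, (c p).toSet) : ∑ p, cubeWeight c x p = 1 := by
  simpa using sum_cubeWeight_mul hinj hface hx (g := 1) (a := 1) (by simp)

theorem barycenter_cubeWeight [Fintype P] [Countable ι] (hinj : Function.Injective c)
    (hface : IsLowerSet (range c)) (hx : x ∈ ⋃ p, (c p).toSet) :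
    barycenter c (cubeWeight c x) = x := by
  funext i
  rw [barycenter_apply, sum_cubeWeight_mul hinj hface hx fun p t ht => ?_,
    integral_midpoint_floor]
  rw [ElementaryInterval.mid, ← (ht.2 i).1, ← (ht.2 i).2]
  push_cast
  rfl

variable [PartialOrder P]

theorem injective_of_le_imp_ge (hc : ∀ {p q}, c q ≤ c p → p ≤ q) : Function.Injective c :=
  fun _ _ h => (hc h.ge).antisymm (hc h.le)

theorem cubeWeight_mem_posetRealization [Finite P] [Countable ι]
    (hc : ∀ {p q}, c q ≤ c p ↔ p ≤ q) (hface : IsLowerSet (range c))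
    (hx : x ∈ ⋃ p, (c p).toSet) : cubeWeight c x ∈ PosetRealization P := by
  cases nonempty_fintype P
  refine PosetRealization.mem_iff_of_fintype.2 ⟨fun _ => measureReal_nonneg,
    sum_cubeWeight (injective_of_le_imp_ge hc.1) hface hx, fun p q hp hq => ?_⟩
  obtain ⟨s, hs⟩ := nonempty_of_measureReal_ne_zero hp
  obtain ⟨t, ht⟩ := nonempty_of_measureReal_ne_zero hq
  exact (le_total s t).imp (fun hst => hc.1 (le_of_mem_levelSet hs ht hst))
    fun hts => hc.1 (le_of_mem_levelSet ht hs hts)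

theorem barycenter_mem_iUnion_toSet [Fintype P] (hc : Antitone c) (hf : f ∈ PosetRealization P) :
    barycenter c f ∈ ⋃ p, (c p).toSet := by
  obtain ⟨p, hp⟩ := PosetRealization.exists_forall_ne_zero_le hf
  obtain ⟨hnonneg, hsum, -⟩ := PosetRealization.mem_iff_of_fintype.1 hf
  refine mem_iUnion.2 ⟨p, ?_⟩
  rw [barycenter, ← Finset.sum_filter_of_ne fun q _ hq => left_ne_zero_of_smul hq]
  refine (convex_Icc _ _).sum_mem (fun q _ => hnonneg q) ?_ fun q hq =>
    center_mem_toSet_of_le (hc (hp q (Finset.mem_filter.1 hq).2))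
  rw [Finset.sum_filter_ne_zero, hsum]

/- For `q ∈ S` the cube of `q` contains that of `p`, so its centre is close to all of `c p`; for the
other `q` in the support the centre lies in `c p`. -/
theorem barycenter_apply_mem_Icc [Fintype P] (hc : Antitone c) (hf : f ∈ PosetRealization P)
    {p : P} {S : Finset P} (hS : ∀ q ∈ S, q ≤ p) (hSc : ∀ q ∉ S, f q ≠ 0 → p ≤ q) (i : ι) :
    barycenter c f i ∈
      Icc ((∑ q ∈ S, f q) * ((c p i).hi - 1 / 2) + (1 - ∑ q ∈ S, f q) * (c p i).lo)
        ((∑ q ∈ S, f q) * ((c p i).lo + 1 / 2) + (1 - ∑ q ∈ S, f q) * (c p i).hi) := by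
  classical
  obtain ⟨hnonneg, hsum, -⟩ := PosetRealization.mem_iff_of_fintype.1 hf
  have hmidS (q) (hq : q ∈ S) := ElementaryInterval.mid_mem_Icc_of_ge (hc (hS q hq) i)
  have hmidSc (q) (hq : q ∉ S) (h0 : f q ≠ 0) :=
    ElementaryInterval.mid_mem_Icc_of_le (hc (hSc q hq h0) i)
  have hcompl : 1 - ∑ q ∈ S, f q = ∑ q ∈ Sᶜ, f q := by
    rw [← hsum, ← Finset.sum_add_sum_compl S, add_sub_cancel_left]
  rw [barycenter_apply, ← Finset.sum_add_sum_compl S, hcompl]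
  simp only [Finset.sum_mul]
  constructor <;> refine add_le_add (Finset.sum_le_sum fun q hq => ?_)
    (Finset.sum_le_sum fun q hq => ?_)
  · exact mul_le_mul_of_nonneg_left (hmidS q hq).1 (hnonneg q)
  · by_cases h0 : f q = 0
    · simp [h0]
    · exact mul_le_mul_of_nonneg_left (hmidSc q (Finset.mem_compl.1 hq) h0).1 (hnonneg q)
  · exact mul_le_mul_of_nonneg_left (hmidS q hq).2 (hnonneg q)
  · by_cases h0 : f q = 0
    · simp [h0]
    · exact mul_le_mul_of_nonneg_left (hmidSc q (Finset.mem_compl.1 hq) h0).2 (hnonneg q)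

open Classical in
theorem sum_le_eq_sum_lt_add [Fintype P] (f : P → ℝ) (p : P) :
    ∑ q with q ≤ p, f q = ∑ q with q < p, f q + f p := by
  have hinsert : ({q | q ≤ p} : Finset P) = insert p ({q | q < p} : Finset P) := by
    ext q
    simp [le_iff_eq_or_lt]
  rw [hinsert, Finset.sum_insert (by simp), add_comm]

open Classical in
theorem Ioo_subset_levelSet_barycenter [Fintype P] (hc : Antitone c)
    (hf : f ∈ PosetRealization P) (p : P) :
    Ioo (∑ q with q < p, f q) (∑ q with q ≤ p, f q) ⊆ levelSet (barycenter c f) (c p) := by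
  rintro t ⟨hlt, hle⟩
  obtain ⟨hnonneg, hsum, htotal⟩ := PosetRealization.mem_iff_of_fintype.1 hf
  have hp : f p ≠ 0 := fun h0 => by
    rw [sum_le_eq_sum_lt_add, h0, add_zero] at hle
    exact hlt.not_gt hle
  have hbelow : 0 ≤ ∑ q with q < p, f q := Finset.sum_nonneg fun q _ => hnonneg q
  have habove : ∑ q with q ≤ p, f q ≤ 1 := hsum ▸
    Finset.sum_le_sum_of_subset_of_nonneg (Finset.subset_univ _) fun q _ _ => hnonneg q
  refine ⟨⟨hbelow.trans_lt hlt, hle.le.trans habove⟩, fun i => ?_⟩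
  have hboundsLt := barycenter_apply_mem_Icc hc hf (p := p) (S := {q | q < p})
    (by simp +contextual [le_of_lt])
    (fun q hq h0 => (htotal p q hp h0).elim id fun h =>
      (h.eq_of_not_lt (by simpa using hq)).ge) i
  have hboundsLe := barycenter_apply_mem_Icc hc hf (p := p) (S := {q | q ≤ p}) (by simp)
    (fun q hq h0 => (htotal p q hp h0).resolve_right (by simpa using hq)) i
  have hlohi : ((c p i).lo : ℝ) ≤ (c p i).hi := mod_cast (c p i).lo_le_hi
  have hhilo : ((c p i).hi : ℝ) ≤ (c p i).lo + 1 := mod_cast (c p i).hi_le_lo_add_one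
  have hprodLt := mul_nonneg hbelow (sub_nonneg.2 hlohi)
  have hprodLe := mul_nonneg (sub_nonneg.2 habove) (sub_nonneg.2 hhilo)
  rw [← eq_sub_iff_add_eq, Int.floor_eq_iff, Int.floor_eq_iff, Int.cast_sub, Int.cast_one]
  refine ⟨⟨?_, ?_⟩, ?_, ?_⟩
  · linarith [hboundsLt.1]
  · linarith [hboundsLe.2]
  · linarith [hboundsLe.1]
  · linarith [hboundsLt.2]

theorem le_cubeWeight_barycenter [Fintype P] (hc : Antitone c) (hf : f ∈ PosetRealization P)
    (p : P) : f p ≤ cubeWeight c (barycenter c f) p := by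
  classical
  calc f p = volume.real (Ioo (∑ q with q < p, f q) (∑ q with q ≤ p, f q)) := by
        rw [Real.volume_real_Ioo, sum_le_eq_sum_lt_add, add_sub_cancel_left, max_eq_left (hf.1 p)]
    _ ≤ cubeWeight c (barycenter c f) p :=
        measureReal_mono (Ioo_subset_levelSet_barycenter hc hf p)
          (measure_ne_top_of_subset (fun _ ht => ht.1) measure_Ioc_lt_top.ne)

theorem cubeWeight_barycenter [Fintype P] [Countable ι] (hc : ∀ {p q}, c q ≤ c p ↔ p ≤ q)
    (hface : IsLowerSet (range c)) (hf : f ∈ PosetRealization P) :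
    cubeWeight c (barycenter c f) = f := by
  -- Both families of weights have total mass `1`, so the inequality between them is an equality.
  have hanti : Antitone c := fun _ _ => hc.2
  have hsum : ∑ p, f p = ∑ p, cubeWeight c (barycenter c f) p :=
    (PosetRealization.mem_iff_of_fintype.1 hf).2.1.trans
      (sum_cubeWeight (injective_of_le_imp_ge hc.1) hface
        (barycenter_mem_iUnion_toSet hanti hf)).symm
  funext p
  exact ((Finset.sum_eq_sum_iff_of_le fun q _ => le_cubeWeight_barycenter hanti hf q).1 hsum p
    (Finset.mem_univ p)).symm

theorem nonempty_posetRealization_homeomorph_iUnion_toSet [Finite P] [Countable ι]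
    (hc : ∀ {p q}, c q ≤ c p ↔ p ≤ q) (hface : IsLowerSet (range c)) :
    Nonempty (PosetRealization P ≃ₜ ⋃ p, (c p).toSet) := by
  cases nonempty_fintype P
  have hanti : Antitone c := fun _ _ => hc.2
  let e : PosetRealization P ≃ ⋃ p, (c p).toSet :=
    { toFun f := ⟨barycenter c f, barycenter_mem_iUnion_toSet hanti f.2⟩
      invFun x := ⟨cubeWeight c x, cubeWeight_mem_posetRealization hc hface x.2⟩
      left_inv f := Subtype.ext (cubeWeight_barycenter hc hface f.2)
      right_inv x := Subtype.ext
        (barycenter_cubeWeight (injective_of_le_imp_ge hc.1) hface x.2) }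
  have := isCompact_iff_compactSpace.1 (PosetRealization.isCompact P)
  exact ⟨Continuous.homeoOfEquivCompactToT2 (f := e)
    (((continuous_barycenter c).comp continuous_subtype_val).subtype_mk _)⟩

end ElementaryCube

/-! ### Words as elementary cubes -/

theorem forall₂_trans {α : Type*} {R : α → α → Prop} [IsTrans α R] {L₁ L₂ L₃ : List α}
    (h₁₂ : List.Forall₂ R L₁ L₂) (h₂₃ : List.Forall₂ R L₂ L₃) : List.Forall₂ R L₁ L₃ := by
  induction h₁₂ generalizing L₃ with
  | nil => exact h₂₃
  | cons h _ ih =>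
    obtain ⟨_, _, h', ht, rfl⟩ := List.forall₂_cons_left_iff.1 h₂₃
    exact .cons (_root_.trans h h') (ih ht)

namespace XLetter

open ElementaryInterval

instance : Finite XLetter :=
  finite_univ_iff.1 ((toFinite {A, B, AB}).subset fun x _ => by cases x <;> simp)

theorem length_le (w : List XLetter) : w.length ≤ (w.map ca).sum + (w.map cb).sum := by
  induction w with
  | nil => simp
  | cons x w ih =>
    cases x <;> simp only [List.length_cons, List.map_cons, List.sum_cons, ca, cb] <;> lia

/-- The factors of the cube encoded by a word which is preceded by `k` letters `b`: each letter
containing an `a` contributes the interval from the number of `b`s strictly before it to the number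
of `b`s up to and including it. -/
def cells : ℤ → List XLetter → List ElementaryInterval
  | _, [] => []
  | k, A :: w => point k :: cells k w
  | k, B :: w => cells (k + 1) w
  | k, AB :: w => unit k :: cells (k + 1) w

variable {k : ℤ} {u v w : List XLetter} {L : List ElementaryInterval} {I : ElementaryInterval}

theorem length_cells (k : ℤ) (w : List XLetter) : (cells k w).length = (w.map ca).sum := by
  induction w generalizing k with
  | nil => rfl
  | cons x w ih => cases x <;> simp [cells, ca, ih, add_comm]

theorem cells_append (k : ℤ) (u v : List XLetter) :
    cells k (u ++ v) = cells k u ++ cells (k + (u.map cb).sum) v := by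
  induction u generalizing k with
  | nil => simp [cells]
  | cons x u ih => cases x <;> simp [cells, cb, ih, add_assoc]

theorem bounds_of_mem_cells (hI : I ∈ cells k w) : k ≤ I.lo ∧ I.hi ≤ k + (w.map cb).sum := by
  induction w generalizing k with
  | nil => simp [cells] at hI
  | cons x w ih =>
    cases x <;> simp only [cells, List.mem_cons] at hI <;>
      simp only [List.map_cons, List.sum_cons, cb, Nat.cast_add] <;>
      grind [point_lo, point_hi, unit_lo, unit_hi]

theorem pairwise_cells (k : ℤ) (w : List XLetter) :
    (cells k w).Pairwise fun I J => I.hi ≤ J.lo := by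
  induction w generalizing k with
  | nil => exact .nil
  | cons x w ih =>
    cases x
    · exact .cons (fun J hJ => (bounds_of_mem_cells hJ).1) (ih k)
    · exact ih (k + 1)
    · exact .cons (fun J hJ => (bounds_of_mem_cells hJ).1) (ih (k + 1))

theorem cells_replicate_B (k : ℤ) (n : ℕ) : cells k (List.replicate n B) = [] := by
  induction n generalizing k with
  | zero => rfl
  | succ _ ih => exact ih (k + 1)

theorem sum_map_cb_replicate_B (n : ℕ) : ((List.replicate n B).map cb).sum = n := by
  simp [cb]

theorem exists_cells_cons_eq (I : ElementaryInterval) :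
    ∃ x : XLetter, I.lo + x.cb = I.hi ∧ ∀ w, cells I.lo (x :: w) = I :: cells I.hi w := by
  rcases I.eq_point_or_eq_unit with h | h <;> rw [h]
  · exact ⟨A, add_zero _, fun _ => rfl⟩
  · exact ⟨AB, rfl, fun _ => rfl⟩

theorem exists_cells_eq {N : ℤ} (hkN : k ≤ N) (hL : L.Pairwise fun I J => I.hi ≤ J.lo)
    (hb : ∀ I ∈ L, k ≤ I.lo ∧ I.hi ≤ N) : ∃ w, cells k w = L ∧ k + (w.map cb).sum = N := by
  induction L generalizing k with
  | nil =>
    refine ⟨List.replicate (N - k).toNat B, cells_replicate_B k _, ?_⟩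
    rw [sum_map_cb_replicate_B]
    lia
  | cons I L ih =>
    obtain ⟨hIL, hL⟩ := List.pairwise_cons.1 hL
    obtain ⟨hI, hb⟩ := List.forall_mem_cons.1 hb
    obtain ⟨w, rfl, hw⟩ := ih hI.2 hL fun J hJ => ⟨hIL J hJ, (hb J hJ).2⟩
    obtain ⟨x, hx, hcons⟩ := exists_cells_cons_eq I
    have hpad : k + ((I.lo - k).toNat : ℤ) = I.lo := by lia
    refine ⟨List.replicate (I.lo - k).toNat B ++ x :: w, ?_, ?_⟩
    · rw [cells_append, cells_replicate_B, List.nil_append, sum_map_cb_replicate_B, hpad, hcons]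
    · rw [List.map_append, List.sum_append, sum_map_cb_replicate_B, List.map_cons, List.sum_cons]
      simp only [Nat.cast_add]
      lia

theorem forall₂_cells_of_xStep (h : XStep u v) (k : ℤ) :
    List.Forall₂ (· ≤ ·) (cells k v) (cells k u) := by
  obtain ⟨p, q, rfl, rfl | rfl⟩ := h <;> simp only [List.append_assoc, cells_append k p] <;>
    refine List.rel_append (List.forall₂_refl _) (.cons ?_ (List.forall₂_refl _))
  · exact ⟨le_rfl, (lt_add_one _).le⟩
  · exact ⟨(lt_add_one _).le, le_rfl⟩

theorem forall₂_cells_of_reflTransGen (h : Relation.ReflTransGen XStep u v) (k : ℤ) :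
    List.Forall₂ (· ≤ ·) (cells k v) (cells k u) := by
  induction h with
  | refl => exact List.forall₂_refl _
  | tail _ h ih => exact forall₂_trans (forall₂_cells_of_xStep h k) ih

theorem xStep_cons (x : XLetter) (h : XStep u v) : XStep (x :: u) (x :: v) := by
  obtain ⟨p, q, rfl, h⟩ := h
  exact ⟨x :: p, q, rfl, h.imp (congrArg (x :: ·)) (congrArg (x :: ·))⟩

theorem reflTransGen_cons (x : XLetter) (h : Relation.ReflTransGen XStep u v) :
    Relation.ReflTransGen XStep (x :: u) (x :: v) :=
  Relation.ReflTransGen.lift (x :: ·) (fun _ _ => xStep_cons x) _ _ h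

theorem exists_eq_A_cons (h : List.Forall₂ (· ≤ ·) (cells k v) (I :: L)) (hI : I.hi ≤ k) :
    ∃ w, v = A :: w := by
  obtain ⟨J, _, hJ, -, hv⟩ := List.forall₂_cons_right_iff.1 h
  rcases v with _ | ⟨_ | _ | _, w⟩
  · cases hv
  · exact ⟨w, rfl⟩
  · have hlo : k + 1 ≤ J.lo := (bounds_of_mem_cells (hv ▸ List.mem_cons_self)).1
    have := J.lo_le_hi.trans hJ.2
    lia
  · obtain rfl : unit k = J := (List.cons.inj hv).1
    have := hJ.2
    rw [unit_hi] at this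
    lia

theorem exists_eq_B_cons (h : List.Forall₂ (· ≤ ·) (cells k v) L) (hL : ∀ I ∈ L, k < I.lo)
    (hv : (v.map cb).sum ≠ 0) : ∃ w, v = B :: w := by
  have hhead {J L'} (heq : cells k v = J :: L') : k < J.lo := by
    obtain ⟨I, _, hJI, -, rfl⟩ := List.forall₂_cons_left_iff.1 (heq ▸ h)
    exact (hL I List.mem_cons_self).trans_le hJI.1
  rcases v with _ | ⟨_ | _ | _, w⟩
  · exact absurd rfl hv
  · exact absurd (hhead rfl) (lt_irrefl k)
  · exact ⟨w, rfl⟩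
  · exact absurd (hhead rfl) (lt_irrefl k)

theorem reflTransGen_of_forall₂_cells (h : List.Forall₂ (· ≤ ·) (cells k v) (cells k u))
    (hb : (u.map cb).sum = (v.map cb).sum) : Relation.ReflTransGen XStep u v := by
  have hlow {m : ℤ} {w : List XLetter} : ∀ I ∈ cells (m + 1) w, m < I.lo := fun I hI =>
    (bounds_of_mem_cells hI).1
  induction u generalizing k v with
  | nil =>
    rcases v with _ | ⟨_ | _ | _, v⟩
    · exact .refl
    · cases h
    · exact absurd hb.symm (by simp [cb])
    · cases h
  | cons x u ih =>
    cases x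
    · obtain ⟨v, rfl⟩ := exists_eq_A_cons h le_rfl
      exact reflTransGen_cons A (ih (List.forall₂_cons.1 h).2 (by simpa [cb] using hb))
    · obtain ⟨v, rfl⟩ := exists_eq_B_cons h hlow (by simp [← hb, cb])
      exact reflTransGen_cons B (ih h (by simpa [cb] using hb))
    · rcases v with _ | ⟨_ | _ | _, v⟩
      · cases h
      · have htail := (List.forall₂_cons.1 h).2
        have hb' : 1 + (u.map cb).sum = (v.map cb).sum := by simpa [cb] using hb
        obtain ⟨v, rfl⟩ := exists_eq_B_cons htail hlow (by lia)
        exact (reflTransGen_cons AB (ih htail (by simpa [cb] using hb'))).tail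
          ⟨[], v, rfl, .inl rfl⟩
      · obtain ⟨v, rfl⟩ := exists_eq_A_cons (k := k + 1) h le_rfl
        exact (reflTransGen_cons AB (ih (List.forall₂_cons.1 h).2 (by simpa [cb] using hb))).tail
          ⟨[], v, rfl, .inr rfl⟩
      · exact reflTransGen_cons AB (ih (List.forall₂_cons.1 h).2 (by simpa [cb] using hb))

end XLetter

theorem isIntegerCube_iff_exists_eq_toSet {l : ℕ} {C : Set (Fin l → ℝ)} :
    IsIntegerCube C ↔ ∃ Q : ElementaryCube (Fin l), C = Q.toSet := by
  constructor
  · rintro ⟨m, s, rfl⟩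
    refine ⟨fun i => if s i then .unit (m i) else .point (m i), ?_⟩
    rw [ElementaryCube.toSet, ← pi_univ_Icc]
    congr! with i
    split_ifs <;> simp
  · rintro ⟨Q, rfl⟩
    refine ⟨fun i => (Q i).lo, fun i => (Q i).lo < (Q i).hi, ?_⟩
    rw [ElementaryCube.toSet, ← pi_univ_Icc]
    congr! with i
    rcases (Q i).lo_le_hi.eq_or_lt with h | h
    · simp [← h]
    · have hhi : (Q i).hi = (Q i).lo + 1 := (Q i).hi_le_lo_add_one.antisymm h
      simp [hhi]

theorem ElementaryCube.toSet_subset_XDomain_iff {l r : ℕ} {Q : ElementaryCube (Fin l)} :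
    Q.toSet ⊆ XDomain l r ↔
      (∀ i j, i < j → (Q i).hi ≤ (Q j).lo) ∧ ∀ i, 0 ≤ (Q i).lo ∧ (Q i).hi ≤ r := by
  have hQ (i) : ((Q i).lo : ℝ) ≤ (Q i).hi := mod_cast (Q i).lo_le_hi
  constructor
  · intro h
    refine ⟨fun i j hij => ?_, fun i => ⟨?_, ?_⟩⟩
    · have hmem : Function.update (fun i => ((Q i).lo : ℝ)) i (Q i).hi ∈ Q.toSet :=
        mem_toSet.2 fun j => by
          obtain rfl | hji := eq_or_ne j i
          · simp [hQ]
          · simp [hji, hQ]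
      have := (h hmem).1 i j hij.le
      rwa [Function.update_self, Function.update_of_ne hij.ne', Int.cast_le] at this
    · exact Int.cast_nonneg_iff.1 ((h (left_mem_Icc.2 hQ)).2.1 i)
    · exact Int.cast_le.1 (((h (right_mem_Icc.2 hQ)).2.2 i).trans_eq (Int.cast_natCast r).symm)
  · rintro ⟨hmono, hb⟩ x hx
    rw [mem_toSet] at hx
    refine ⟨fun i j hij => ?_, fun i => ?_, fun i => ?_⟩
    · obtain rfl | hij := hij.eq_or_lt
      · exact le_rfl
      · exact (hx i).2.trans ((Int.cast_le.2 (hmono i j hij)).trans (hx j).1)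
    · exact (Int.cast_nonneg (hb i).1).trans (hx i).1
    · exact (hx i).2.trans (mod_cast (hb i).2)

namespace XWord

variable {l r : ℕ}

theorem length_cells (w : XWord l r) : (XLetter.cells 0 w.1).length = l :=
  (XLetter.length_cells 0 w.1).trans w.2.1

/-- The integer cube in `D_{ℓ,r}` encoded by a word. -/
def cube (w : XWord l r) : ElementaryCube (Fin l) := fun i =>
  (XLetter.cells 0 w.1)[i.1]'(w.length_cells.symm ▸ i.2)

theorem cube_le_cube_iff {v w : XWord l r} : w.cube ≤ v.cube ↔ v ≤ w := by
  calc w.cube ≤ v.cube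
      ↔ List.Forall₂ (· ≤ ·) (XLetter.cells 0 w.1) (XLetter.cells 0 v.1) := by
        rw [List.forall₂_iff_get]
        exact ⟨fun h => ⟨w.length_cells.trans v.length_cells.symm,
          fun i hi _ => h ⟨i, hi.trans_eq w.length_cells⟩⟩, fun h i => h.2 i.1 _ _⟩
    _ ↔ v ≤ w := ⟨fun h => XLetter.reflTransGen_of_forall₂_cells h (v.2.2.trans w.2.2.symm),
        fun h => XLetter.forall₂_cells_of_reflTransGen h 0⟩

instance : Finite (XWord l r) :=
  ((List.finite_length_le XLetter (l + r)).subset fun w hw =>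
    (XLetter.length_le w).trans_eq (congrArg₂ _ hw.1 hw.2)).to_subtype

theorem range_cube : range (cube : XWord l r → _) = {Q | Q.toSet ⊆ XDomain l r} := by
  ext Q
  rw [mem_ofPred_eq, ElementaryCube.toSet_subset_XDomain_iff]
  constructor
  · rintro ⟨w, rfl⟩
    refine ⟨fun i j hij =>
      List.pairwise_iff_getElem.1 (XLetter.pairwise_cells 0 w.1) i j _ _ hij, fun i => ?_⟩
    simpa only [w.2.2, zero_add] using
      XLetter.bounds_of_mem_cells (k := 0) (w := w.1) (I := w.cube i) (List.getElem_mem _)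
  · rintro ⟨hmono, hb⟩
    obtain ⟨w, hw, hw'⟩ := XLetter.exists_cells_eq (k := 0) (L := List.ofFn Q) (N := r)
      (by simp) (List.pairwise_ofFn.2 fun i j => hmono i j)
      (by simpa [List.mem_ofFn, forall_mem_range] using hb)
    refine ⟨⟨w, ?_, Int.natCast_inj.1 (by rwa [zero_add] at hw')⟩, ?_⟩
    · rw [← XLetter.length_cells 0, hw, List.length_ofFn]
    · funext i
      simp [cube, hw]

theorem isLowerSet_range_cube : IsLowerSet (range (cube : XWord l r → _)) := by
  rw [range_cube]
  exact fun Q R hRQ hQ => (ElementaryCube.toSet_mono hRQ).trans hQ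

end XWord

theorem Dlr_eq_iUnion_toSet (l r : ℕ) : Dlr l r = ⋃ w : XWord l r, w.cube.toSet := by
  calc Dlr l r = ⋃ Q ∈ {Q : ElementaryCube (Fin l) | Q.toSet ⊆ XDomain l r}, Q.toSet := by
        ext x
        simp [Dlr, isIntegerCube_iff_exists_eq_toSet]
    _ = ⋃ w : XWord l r, w.cube.toSet := by rw [← XWord.range_cube, biUnion_range]

/-- **Lemma 2.5.** For all `ℓ, r ≥ 0`, the geometric realization of the poset `X_{ℓ,r}`
is homeomorphic to the subspace `D_{ℓ,r} ⊆ ℝ^ℓ`, the union of the integer cubes contained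
in the domain `0 ≤ x 1 ≤ … ≤ x ℓ ≤ r`. -/
theorem realization_XWord_homeomorph_Dlr (l r : ℕ) :
    Nonempty (↥(PosetRealization (XWord l r)) ≃ₜ ↥(Dlr l r)) := by
  rw [Dlr_eq_iUnion_toSet]
  exact ElementaryCube.nonempty_posetRealization_homeomorph_iUnion_toSet
    XWord.cube_le_cube_iff XWord.isLowerSet_range_cube
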